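/- Let L₁, L₂ ⊆ Σ* be languages each recognized by a finite aperiodic monoid. Then the language of all words w admitting exactly one factorization w = uv with u ∈ L₁ and v ∈ L₂ is recognized by a finite aperiodic monoid. -/

import Mathlib

/-!
Let `φ₁ : A* → M₁` and `φ₂ : A* → M₂` recognize `L₁` and `L₂`. For a relation `Q ⊆ M₁ × M₂`, let
`splitCount φ₁ φ₂ w Q` be the number of factorizations `w = uv` with `v ≠ ε` and
`Q (φ₁ u) (φ₂ v)`. Leaving out the factorization `w = w · ε` makes this count additive over
concatenation (`splitCount_append`): a cut of `uv` lies strictly before the end of `u`, or in `v`.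

Consequently the triple `(φ₁ w, φ₂ w, Q ↦ min 2 (splitCount w Q))` (`profile`), which lives in a
finite type, is a congruence on `A*`. It determines whether `w` has exactly one factorization in
`L₁ × L₂`, as one only has to know the count up to the threshold `2` and to account separately for
the cut at the end. The quotient is aperiodic: if `N` is an exponent for both `M₁` and `M₂`, write
`w ^ (2N+2) = w^N · w² · w^N` and `w ^ (2N+3) = w^N · w³ · w^N`. The outer factors contribute equally
to the counts of both words, and every copy of `w` in the middle contributes the same number `c`;
finally `min 2 (2c) = min 2 (3c)`.
-/

/-- `L` is recognized by a finite aperiodic monoid. -/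
def RecAperiodic {A : Type} (L : Set (List A)) : Prop :=
  ∃ (M : Type) (_ : Monoid M) (_ : Fintype M) (φ : List A → M) (P : Set M),
    φ [] = 1 ∧ (∀ u v : List A, φ (u ++ v) = φ u * φ v) ∧
    (∃ n, 1 ≤ n ∧ ∀ x : M, x ^ n = x ^ (n + 1)) ∧ L = φ ⁻¹' P

open scoped Classical in
/-- The number of factorizations `w = uv` with `v` nonempty and `Q (φ₁ u) (φ₂ v)`, the cut being
encoded by the length `i < |w|` of `u`. -/
noncomputable def splitCount {A M₁ M₂ : Type} (φ₁ : List A → M₁) (φ₂ : List A → M₂)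
    (w : List A) (Q : M₁ → M₂ → Prop) : ℕ :=
  ∑ i ∈ Finset.range w.length, if Q (φ₁ (w.take i)) (φ₂ (w.drop i)) then 1 else 0

theorem splitCount_append {A M₁ M₂ : Type} [Monoid M₁] [Monoid M₂]
    {φ₁ : List A → M₁} {φ₂ : List A → M₂}
    (hm₁ : ∀ u v, φ₁ (u ++ v) = φ₁ u * φ₁ v) (hm₂ : ∀ u v, φ₂ (u ++ v) = φ₂ u * φ₂ v)
    (u v : List A) (Q : M₁ → M₂ → Prop) :
    splitCount φ₁ φ₂ (u ++ v) Q =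
      splitCount φ₁ φ₂ u (fun a b => Q a (b * φ₂ v)) +
      splitCount φ₁ φ₂ v (fun a b => Q (φ₁ u * a) b) := by
  unfold splitCount
  rw [List.length_append, Finset.sum_range_add]
  congr 1
  · refine Finset.sum_congr rfl fun i hi => ?_
    have hi := (Finset.mem_range.1 hi).le
    rw [List.take_append_of_le_length hi, List.drop_append_of_le_length hi, hm₂]
  · refine Finset.sum_congr rfl fun i _ => ?_
    rw [List.take_length_add_append, List.drop_length_add_append, hm₁]

/-- The invariant of a word: its two images, and its split counts truncated at `2`. -/
noncomputable def profile {A M₁ M₂ : Type} (φ₁ : List A → M₁) (φ₂ : List A → M₂)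
    (w : List A) : M₁ × M₂ × ((M₁ → M₂ → Prop) → Fin 3) :=
  (φ₁ w, φ₂ w, fun Q => ⟨min 2 (splitCount φ₁ φ₂ w Q), by omega⟩)

theorem profile_eq_iff {A M₁ M₂ : Type} {φ₁ : List A → M₁} {φ₂ : List A → M₂} {w w' : List A} :
    profile φ₁ φ₂ w = profile φ₁ φ₂ w' ↔ φ₁ w = φ₁ w' ∧ φ₂ w = φ₂ w' ∧
      ∀ Q, min 2 (splitCount φ₁ φ₂ w Q) = min 2 (splitCount φ₁ φ₂ w' Q) := by
  simp [profile, funext_iff]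

/-- A language that is a union of classes of a congruence on words is recognized by a finite
aperiodic monoid when the congruence is the kernel of a map to a finite type and its quotient is
aperiodic. -/
theorem recAperiodic_of_congruence {A X : Type} [Finite X] (ψ : List A → X) (L : Set (List A))
    (hcong : ∀ u u' v v', ψ u = ψ u' → ψ v = ψ v' → ψ (u ++ v) = ψ (u' ++ v'))
    (haper : ∃ n, 1 ≤ n ∧ ∀ w : FreeMonoid A,
      ψ (FreeMonoid.toList (w ^ n)) = ψ (FreeMonoid.toList (w ^ (n + 1))))
    (hL : ∀ w w', ψ w = ψ w' → w ∈ L → w' ∈ L) : RecAperiodic L := by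
  let c : Con (FreeMonoid A) :=
    { r := fun u v => ψ u.toList = ψ v.toList
      iseqv := ⟨fun _ => rfl, fun h => h.symm, fun h h' => h.trans h'⟩
      mul' := fun {u u' v v'} h h' => by
        simpa only [FreeMonoid.toList_mul] using hcong _ _ _ _ h h' }
  have hc : ∀ u v : FreeMonoid A, (u : c.Quotient) = v ↔ ψ u.toList = ψ v.toList :=
    fun u v => c.eq
  have : Finite c.Quotient := by
    refine Finite.of_injective
      (Quotient.lift (fun u : FreeMonoid A => ψ u.toList) fun _ _ h => h) ?_
    rintro ⟨u⟩ ⟨v⟩ h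
    exact (hc u v).2 h
  refine ⟨c.Quotient, inferInstance, Fintype.ofFinite _,
    fun w => (FreeMonoid.ofList w : c.Quotient),
    (fun w => (FreeMonoid.ofList w : c.Quotient)) '' L, ?_, ?_, ?_, ?_⟩
  · rfl
  · intro u v
    rfl
  · obtain ⟨n, hn, h⟩ := haper
    refine ⟨n, hn, ?_⟩
    rintro ⟨w⟩
    exact (hc (w ^ n) (w ^ (n + 1))).2 (h w)
  · ext w
    constructor
    · exact fun hw => ⟨w, hw, rfl⟩
    · rintro ⟨w', hmem, h⟩
      exact hL w' w ((hc _ _).1 h) hmem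

/-- In terms of counts, unique factorization means that the cuts before the end of `w`, together
with the cut `w = w · ε`, number exactly one. -/
theorem existsUnique_iff_splitCount {A M₁ M₂ : Type} (φ₁ : List A → M₁) (φ₂ : List A → M₂)
    (P₁ : Set M₁) (P₂ : Set M₂) (w : List A) [Decidable (φ₁ w ∈ P₁ ∧ φ₂ [] ∈ P₂)] :
    (∃! p : List A × List A, p.1 ++ p.2 = w ∧ p.1 ∈ φ₁ ⁻¹' P₁ ∧ p.2 ∈ φ₂ ⁻¹' P₂) ↔
      splitCount φ₁ φ₂ w (fun a b => a ∈ P₁ ∧ b ∈ P₂) +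
        (if φ₁ w ∈ P₁ ∧ φ₂ [] ∈ P₂ then 1 else 0) = 1 := by
  classical
  have key : splitCount φ₁ φ₂ w (fun a b => a ∈ P₁ ∧ b ∈ P₂) +
      (if φ₁ w ∈ P₁ ∧ φ₂ [] ∈ P₂ then 1 else 0) =
      ((Finset.range (w.length + 1)).filter
        fun i => φ₁ (w.take i) ∈ P₁ ∧ φ₂ (w.drop i) ∈ P₂).card := by
    rw [Finset.card_filter, Finset.sum_range_succ, List.take_length, List.drop_length]
    unfold splitCount
    congr!
  rw [key, Finset.card_eq_one]
  simp only [Finset.ext_iff, Finset.mem_filter, Finset.mem_range, Finset.mem_singleton]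
  constructor
  · rintro ⟨⟨u, v⟩, ⟨rfl, hu, hv⟩, huniq⟩
    refine ⟨u.length, fun i => ⟨?_, ?_⟩⟩
    · rintro ⟨hi, h⟩
      have h' := huniq ((u ++ v).take i, (u ++ v).drop i) ⟨List.take_append_drop _ _, h⟩
      dsimp only at hi
      have h'' := congrArg (fun p => p.1.length) h'
      simp only [List.length_take] at h'' hi
      omega
    · rintro rfl
      refine ⟨by simp, ?_⟩
      simpa using ⟨hu, hv⟩
  · rintro ⟨i, hi⟩
    refine ⟨(w.take i, w.drop i), ⟨List.take_append_drop _ _, ((hi i).2 rfl).2⟩, ?_⟩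
    rintro ⟨u, v⟩ ⟨rfl, hu, hv⟩
    have : u.length = i := (hi u.length).1 ⟨by simp, by simpa using ⟨hu, hv⟩⟩
    subst this
    simp

theorem profile_congr {A M₁ M₂ : Type} [Monoid M₁] [Monoid M₂]
    {φ₁ : List A → M₁} {φ₂ : List A → M₂}
    (hm₁ : ∀ u v, φ₁ (u ++ v) = φ₁ u * φ₁ v) (hm₂ : ∀ u v, φ₂ (u ++ v) = φ₂ u * φ₂ v)
    (u u' v v' : List A) (hu : profile φ₁ φ₂ u = profile φ₁ φ₂ u')
    (hv : profile φ₁ φ₂ v = profile φ₁ φ₂ v') :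
    profile φ₁ φ₂ (u ++ v) = profile φ₁ φ₂ (u' ++ v') := by
  rw [profile_eq_iff] at *
  obtain ⟨hu₁, hu₂, hu⟩ := hu
  obtain ⟨hv₁, hv₂, hv⟩ := hv
  refine ⟨by rw [hm₁, hm₁, hu₁, hv₁], by rw [hm₂, hm₂, hu₂, hv₂], fun Q => ?_⟩
  rw [splitCount_append hm₁ hm₂, splitCount_append hm₁ hm₂, hu₁, hv₂]
  have h₁ := hu fun a b => Q a (b * φ₂ v')
  have h₂ := hv fun a b => Q (φ₁ u' * a) b
  omega

/-- If `N` is an aperiodicity exponent for `M₁` and `M₂`, then `2N + 2` is one for profiles. -/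
theorem profile_aperiodic {A M₁ M₂ : Type} [Monoid M₁] [Monoid M₂]
    {φ₁ : List A → M₁} {φ₂ : List A → M₂}
    (hm₁ : ∀ u v, φ₁ (u ++ v) = φ₁ u * φ₁ v) (hm₂ : ∀ u v, φ₂ (u ++ v) = φ₂ u * φ₂ v)
    (he₁ : φ₁ [] = 1) (he₂ : φ₂ [] = 1) {N : ℕ}
    (hN₁ : ∀ x : M₁, x ^ N = x ^ (N + 1)) (hN₂ : ∀ x : M₂, x ^ N = x ^ (N + 1))
    (w : FreeMonoid A) :
    profile φ₁ φ₂ (FreeMonoid.toList (w ^ (2 * N + 2))) =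
      profile φ₁ φ₂ (FreeMonoid.toList (w ^ (2 * N + 2 + 1))) := by
  have hp₁ : ∀ k, φ₁ (FreeMonoid.toList (w ^ k)) = φ₁ w.toList ^ k := by
    intro k
    induction k with
    | zero => simpa using he₁
    | succ k ih => rw [pow_succ, FreeMonoid.toList_mul, hm₁, ih, pow_succ]
  have hp₂ : ∀ k, φ₂ (FreeMonoid.toList (w ^ k)) = φ₂ w.toList ^ k := by
    intro k
    induction k with
    | zero => simpa using he₂
    | succ k ih => rw [pow_succ, FreeMonoid.toList_mul, hm₂, ih, pow_succ]
  have hs₁ : ∀ k, φ₁ w.toList ^ (N + k) = φ₁ w.toList ^ N := by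
    intro k
    induction k with
    | zero => rfl
    | succ k ih => rw [← add_assoc, pow_succ, ih, ← pow_succ, ← hN₁]
  have hs₂ : ∀ k, φ₂ w.toList ^ (k + N) = φ₂ w.toList ^ N := by
    intro k
    induction k with
    | zero => rw [zero_add]
    | succ k ih => rw [add_right_comm, pow_succ, ih, ← pow_succ, ← hN₂]
  -- A middle block `w ^ k` between two copies of `w ^ N` contributes `k` times the same number,
  -- because `w ^ N` absorbs further copies of `w` on either side.
  have hmid : ∀ (Q : M₁ → M₂ → Prop) (k : ℕ),
      splitCount φ₁ φ₂ (FreeMonoid.toList (w ^ k))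
        (fun a b => Q (φ₁ w.toList ^ N * a) (b * φ₂ w.toList ^ N)) =
      k * splitCount φ₁ φ₂ w.toList
        (fun a b => Q (φ₁ w.toList ^ N * a) (b * φ₂ w.toList ^ N)) := by
    intro Q k
    induction k with
    | zero => simp [splitCount]
    | succ k ih =>
      rw [pow_succ, FreeMonoid.toList_mul, splitCount_append hm₁ hm₂, hp₁]
      simp only [mul_assoc, ← pow_succ']
      simp only [← mul_assoc, ← pow_add, hs₁, ← hN₂]
      rw [ih]
      ring
  have hcount : ∀ (Q : M₁ → M₂ → Prop) (k : ℕ),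
      splitCount φ₁ φ₂ (FreeMonoid.toList (w ^ (N + (k + N)))) Q =
      splitCount φ₁ φ₂ (FreeMonoid.toList (w ^ N)) (fun a b => Q a (b * φ₂ w.toList ^ N)) +
      (k * splitCount φ₁ φ₂ w.toList
        (fun a b => Q (φ₁ w.toList ^ N * a) (b * φ₂ w.toList ^ N)) +
      splitCount φ₁ φ₂ (FreeMonoid.toList (w ^ N)) (fun a b => Q (φ₁ w.toList ^ N * a) b)) := by
    intro Q k
    rw [pow_add, FreeMonoid.toList_mul, splitCount_append hm₁ hm₂, hp₁, hp₂, hs₂, pow_add,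
      FreeMonoid.toList_mul, splitCount_append hm₁ hm₂, hp₁, hp₂, hmid]
    simp only [← mul_assoc, ← pow_add, hs₁]
  have e₂ : 2 * N + 2 = N + (2 + N) := by ring
  have e₃ : N + (2 + N) + 1 = N + (3 + N) := by ring
  rw [e₂, e₃, profile_eq_iff]
  refine ⟨by rw [hp₁, hp₁, hs₁, hs₁], ?_, fun Q => ?_⟩
  · rw [hp₂, hp₂, ← add_assoc, ← add_assoc, hs₂, hs₂]
  · rw [hcount, hcount]
    omega

/-- Theorem: if `L₁` and `L₂` are recognized by finite aperiodic monoids, then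
so is the language of words admitting exactly one factorization `uv` with
`u ∈ L₁` and `v ∈ L₂`. -/
theorem stmt_11 {A : Type} [Fintype A] (L₁ L₂ : Set (List A))
    (h₁ : RecAperiodic L₁) (h₂ : RecAperiodic L₂) :
    RecAperiodic {w : List A |
      ∃! p : List A × List A, p.1 ++ p.2 = w ∧ p.1 ∈ L₁ ∧ p.2 ∈ L₂} := by
  classical
  obtain ⟨M₁, _, _, φ₁, P₁, he₁, hm₁, ⟨n₁, _, ha₁⟩, rfl⟩ := h₁
  obtain ⟨M₂, _, _, φ₂, P₂, he₂, hm₂, ⟨n₂, _, ha₂⟩, rfl⟩ := h₂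
  refine recAperiodic_of_congruence (profile φ₁ φ₂) _ (profile_congr hm₁ hm₂)
    ⟨2 * (n₁ + n₂) + 2, by omega, ?_⟩ ?_
  · refine profile_aperiodic hm₁ hm₂ he₁ he₂ (fun x => ?_) (fun x => ?_)
    · rw [add_right_comm, pow_add, ha₁, ← pow_add]
    · rw [add_assoc, pow_add, ha₂, ← pow_add]
  · intro w w' h hw
    rw [profile_eq_iff] at h
    obtain ⟨hφ, -, h⟩ := h
    have hQ := h fun a b => a ∈ P₁ ∧ b ∈ P₂
    rw [Set.mem_ofPred_eq, existsUnique_iff_splitCount] at hw ⊢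
    rw [← hφ]
    omega
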